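/- (Consistency is preserved by the GPDR rule INDUCTION.) Suppose the configuration ⟨M ∣ R₀,…,R_N; N⟩ is consistent, i + 1 ≤ N, and a frame R : Q → Val → Prop satisfies: for all q and σ, F(fun q' σ' => R_i q' σ' ∧ R q' σ') q σ implies R q σ. Then the configuration ⟨∅ ∣ R₀', …, R_N'; N⟩ is consistent, where R_j' = fun q σ => R_j q σ ∧ R q σ for 1 ≤ j ≤ i + 1 and R_j' = R_j for j = 0 and i + 1 < j ≤ N. -/

import Mathlib

/-- The jump transition `⟨q, σ₁⟩ →δ ⟨q', σ₂⟩` of a DTSTS. -/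
def Jump {Q V : Type*}
    (δ : Set (Q × ((V → ℝ) → Prop) × ((V → ℝ) → (V → ℝ) → Prop) × Q))
    (q : Q) (σ₁ : V → ℝ) (q' : Q) (σ₂ : V → ℝ) : Prop :=
  ∃ φ φc, (q, φ, φc, q') ∈ δ ∧ φ σ₁ ∧ φc σ₁ σ₂

/-- The forward predicate transformer of the DTSTS `(Q, q₀, φ₀, δ)`. -/
def FTrans {Q V : Type*} (q₀ : Q) (φ₀ : (V → ℝ) → Prop)
    (δ : Set (Q × ((V → ℝ) → Prop) × ((V → ℝ) → (V → ℝ) → Prop) × Q))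
    (R : Q → (V → ℝ) → Prop) : Q → (V → ℝ) → Prop :=
  fun q' σ₂ => (q' = q₀ ∧ φ₀ σ₂) ∨
    ∃ q φ φc σ₁, (q, φ, φc, q') ∈ δ ∧ R q σ₁ ∧ φ σ₁ ∧ φc σ₁ σ₂

/-- Consistency of a GPDR configuration `⟨M ∣ R₀,…,R_N; N⟩` (Definition 8).
Frames are given as `R : ℕ → Q → (V → ℝ) → Prop` (only indices `≤ N` matter),
and the trace `M` is a list of triples `(σ, q, i)`. -/
structure Consistent {Q V : Type*} (q₀ : Q) (φ₀ : (V → ℝ) → Prop)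
    (δ : Set (Q × ((V → ℝ) → Prop) × ((V → ℝ) → (V → ℝ) → Prop) × Q))
    (φP : (V → ℝ) → Prop)
    (R : ℕ → Q → (V → ℝ) → Prop) (N : ℕ)
    (M : List ((V → ℝ) × Q × ℕ)) : Prop where
  /-- (Con-A): `R₀` at `q₀` is the initial condition… -/
  conA₁ : ∀ σ, R 0 q₀ σ ↔ φ₀ σ
  /-- (Con-A): …and is `False` at other locations. -/
  conA₂ : ∀ q, q ≠ q₀ → ∀ σ, ¬ R 0 q σ
  /-- (Con-B): the frames are increasing. -/
  conB : ∀ i, i < N → ∀ q σ, R i q σ → R (i + 1) q σ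
  /-- (Con-C): frames below `N` are safe. -/
  conC : ∀ i, i < N → ∀ q σ, R i q σ → φP σ
  /-- (Con-D): frames are closed under the forward predicate transformer. -/
  conD : ∀ i, i < N → ∀ q σ, FTrans q₀ φ₀ δ (R i) q σ → R (i + 1) q σ
  /-- (Con-E): level-`N` trace entries are in `R_N` and violate safety. -/
  conE : ∀ σ q, (σ, q, N) ∈ M → R N q σ ∧ ¬ φP σ
  /-- (Con-F): consecutive trace entries are connected by a transition. -/
  conF : ∀ k i (σ₁ : V → ℝ) (q₁ : Q) (σ₂ : V → ℝ) (q₂ : Q), i < N →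
    M[k]? = some (σ₁, q₁, i) → M[k + 1]? = some (σ₂, q₂, i + 1) →
    ∃ φ φc, (q₁, φ, φc, q₂) ∈ δ ∧ R i q₁ σ₁ ∧ φ σ₁ ∧ φc σ₁ σ₂

/-- Consistency is preserved by the GPDR rule INDUCTION. -/
theorem consistent_induction {Q V : Type*} [Fintype V]
    (q₀ : Q) (φ₀ : (V → ℝ) → Prop)
    (δ : Set (Q × ((V → ℝ) → Prop) × ((V → ℝ) → (V → ℝ) → Prop) × Q))
    (φP : (V → ℝ) → Prop)
    (R : ℕ → Q → (V → ℝ) → Prop) (N i : ℕ)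
    (M : List ((V → ℝ) × Q × ℕ))
    (Rg : Q → (V → ℝ) → Prop)
    (hcons : Consistent q₀ φ₀ δ φP R N M)
    (hiN : i + 1 ≤ N)
    (hind : ∀ q σ, FTrans q₀ φ₀ δ (fun q' σ' => R i q' σ' ∧ Rg q' σ') q σ → Rg q σ) :
    Consistent q₀ φ₀ δ φP
      (fun j => if 1 ≤ j ∧ j ≤ i + 1 then (fun q σ => R j q σ ∧ Rg q σ) else R j)
      N ([] : List ((V → ℝ) × Q × ℕ)) := by
  have h0 : ∀ q σ, R 0 q σ → Rg q σ := by
    intro q σ h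
    apply hind
    left
    by_cases hq : q = q₀
    · subst hq
      exact ⟨rfl, (hcons.conA₁ σ).1 h⟩
    · exact absurd h (hcons.conA₂ q hq σ)
  have hmono : ∀ j k, j ≤ k → k ≤ N → ∀ q σ, R j q σ → R k q σ := by
    intro j k hjk
    induction k, hjk using Nat.le_induction with
    | base => intro _ q σ h; exact h
    | succ k _ ih =>
      intro hk q σ h
      exact hcons.conB k (by omega) q σ (ih (by omega) q σ h)
  have key : ∀ j q σ,
      (if 1 ≤ j ∧ j ≤ i + 1 then (fun q σ => R j q σ ∧ Rg q σ) else R j) q σ ↔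
        (R j q σ ∧ (j ≤ i + 1 → Rg q σ)) := by
    intro j q σ
    split_ifs with h
    · exact ⟨fun a => ⟨a.1, fun _ => a.2⟩, fun a => ⟨a.1, a.2 h.2⟩⟩
    · refine ⟨fun a => ⟨a, fun hj => ?_⟩, fun a => a.1⟩
      have : j = 0 := by omega
      subst this
      exact h0 q σ a
  constructor
  · intro σ
    simpa using hcons.conA₁ σ
  · intro q hq σ
    simpa using hcons.conA₂ q hq σ
  · intro j hj q σ h
    have h' := (key j q σ).1 h
    exact (key (j + 1) q σ).2
      ⟨hcons.conB j hj q σ h'.1, fun hle => h'.2 (by omega)⟩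
  · intro j hj q σ h
    exact hcons.conC j hj q σ ((key j q σ).1 h).1
  · intro j hj q σ h
    refine (key (j + 1) q σ).2 ⟨hcons.conD j hj q σ ?_, fun hle => hind q σ ?_⟩
    · rcases h with h | ⟨p, φ, φc, σ₁, hd, hR, hφ, hc⟩
      · exact Or.inl h
      · exact Or.inr ⟨p, φ, φc, σ₁, hd, ((key j p σ₁).1 hR).1, hφ, hc⟩
    · rcases h with h | ⟨p, φ, φc, σ₁, hd, hR, hφ, hc⟩
      · exact Or.inl h
      · have h' := (key j p σ₁).1 hR
        exact Or.inr ⟨p, φ, φc, σ₁, hd,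
          ⟨hmono j i (by omega) (by omega) p σ₁ h'.1, h'.2 (by omega)⟩, hφ, hc⟩
  · intro σ q h
    simp at h
  · intro k j σ₁ q₁ σ₂ q₂ _ h
    simp at h
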